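/- arXiv:1203.3995 — 3 statements merged into one kernel-verified Lean document; each statement's English description precedes it below -/
import Mathlib

section
/- For every n ≥ 1 and 1 ≤ m ≤ n, the Gårding cone Γ_m is a convex cone in ℝⁿ: if λ, μ ∈ Γ_m and s, t > 0 then sλ + tμ ∈ Γ_m. -/
noncomputable section

/-- `σ_k(λ)`, the `k`-th elementary symmetric polynomial of `λ ∈ ℝⁿ`. -/
def esymm (n k : ℕ) (lam : Fin n → ℝ) : ℝ :=
  ∑ s ∈ Finset.univ.powersetCard k, ∏ i ∈ s, lam i

/-- The Gårding cone `Γ_m = {λ ∈ ℝⁿ : σ_1(λ) > 0, …, σ_m(λ) > 0}`. -/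
def gardingCone (n m : ℕ) : Set (Fin n → ℝ) :=
  {lam | ∀ k, 1 ≤ k → k ≤ m → 0 < esymm n k lam}

open Polynomial in
/-- Generating polynomial of the elementary symmetric functions. -/
def gPoly {ι : Type*} (S : Finset ι) (l : ι → ℝ) : Polynomial ℝ :=
  ∏ i ∈ S, (1 + C (l i) * X)

/-- Elementary symmetric functions over a finset, as coefficients. -/
def gE {ι : Type*} (S : Finset ι) (k : ℕ) (l : ι → ℝ) : ℝ := (gPoly S l).coeff k

open Polynomial in
theorem gE_eq {ι : Type*} [DecidableEq ι] (S : Finset ι) (k : ℕ) (l : ι → ℝ) :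
    gE S k l = ∑ s ∈ S.powersetCard k, ∏ i ∈ s, l i := by
  unfold gE gPoly
  rw [Finset.prod_one_add, Polynomial.finsetSum_coeff]
  have h : ∀ s ∈ S.powerset, (∏ i ∈ s, (C (l i) * X : ℝ[X])).coeff k
      = if s.card = k then ∏ i ∈ s, l i else 0 := by
    intro s _
    rw [Finset.prod_mul_distrib, Finset.prod_const, ← map_prod, coeff_C_mul, coeff_X_pow]
    by_cases h : s.card = k
    · simp [h]
    · simp [h, Ne.symm h]
  rw [Finset.sum_congr rfl h, ← Finset.sum_filter, Finset.powersetCard_eq_filter]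

theorem gE_zero {ι : Type*} [DecidableEq ι] (S : Finset ι) (l : ι → ℝ) : gE S 0 l = 1 := by
  rw [gE_eq]; simp

open Polynomial in
theorem gE_erase {ι : Type*} [DecidableEq ι] (S : Finset ι) (k : ℕ) (l : ι → ℝ) (i : ι)
    (hi : i ∈ S) : gE S (k + 1) l = gE (S.erase i) (k + 1) l + l i * gE (S.erase i) k l := by
  unfold gE gPoly
  rw [← Finset.mul_prod_erase S _ hi, add_mul, one_mul, coeff_add, mul_assoc, coeff_C_mul,
    coeff_X_mul]

open Polynomial in
theorem gE_succ {ι : Type*} [DecidableEq ι] (S : Finset ι) (k : ℕ) (l : ι → ℝ) :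
    ((k : ℝ) + 1) * gE S (k + 1) l = ∑ i ∈ S, l i * gE (S.erase i) k l := by
  have h : derivative (gPoly S l) = ∑ i ∈ S, C (l i) * gPoly (S.erase i) l := by
    unfold gPoly
    rw [derivative_prod_finset]
    refine Finset.sum_congr rfl fun i _ => ?_
    have e : derivative (1 + C (l i) * X : ℝ[X]) = C (l i) := by simp
    rw [e, mul_comm]
  have h2 := congrArg (fun p => p.coeff k) h
  simp only [coeff_derivative, finsetSum_coeff, coeff_C_mul] at h2
  unfold gE
  rw [← h2]; ring

theorem splits_derivative_real (p : Polynomial ℝ) (hp : p.Splits) : p.derivative.Splits := by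
  rw [Polynomial.splits_iff_card_roots] at hp ⊢
  have h1 := Polynomial.card_roots_le_derivative p
  have h2 := Polynomial.card_roots' p.derivative
  have h3 := Polynomial.natDegree_derivative_le p
  omega

theorem splits_iterate_derivative_real (p : Polynomial ℝ) (hp : p.Splits) (k : ℕ) :
    (Polynomial.derivative^[k] p).Splits := by
  induction k with
  | zero => exact hp
  | succ k ih => rw [Function.iterate_succ_apply']; exact splits_derivative_real _ ih

open Polynomial in
theorem laguerre_ineq (p : Polynomial ℝ) (hp : p.Splits) (x : ℝ) :
    p.eval x * p.derivative.derivative.eval x ≤ (p.derivative.eval x) ^ 2 := by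
  refine Submonoid.closure_induction (motive := fun p _ =>
    p.eval x * p.derivative.derivative.eval x ≤ (p.derivative.eval x) ^ 2) ?_ ?_ ?_ hp
  · rintro q (⟨a, rfl⟩ | ⟨a, rfl⟩) <;> simp
  · simp
  · intro f g _ _ hf hg
    simp only [derivative_mul, derivative_add, eval_mul, eval_add]
    nlinarith [mul_le_mul_of_nonneg_left hf (sq_nonneg (g.eval x)),
      mul_le_mul_of_nonneg_left hg (sq_nonneg (f.eval x))]

open Polynomial in
theorem gPoly_splits {ι : Type*} (S : Finset ι) (l : ι → ℝ) : (gPoly S l).Splits := by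
  unfold gPoly
  refine Splits.prod fun i _ => ?_
  refine Splits.of_natDegree_le_one ?_
  compute_degree

open Polynomial in
theorem gE_newton {ι : Type*} (S : Finset ι) (l : ι → ℝ) (k : ℕ) :
    gE S k l * gE S (k + 2) l ≤ gE S (k + 1) l ^ 2 := by
  have h := laguerre_ineq _ (splits_iterate_derivative_real _ (gPoly_splits S l) k) 0
  rw [← Function.iterate_succ_apply' (f := derivative),
    ← Function.iterate_succ_apply' (f := derivative)] at h
  simp only [← coeff_zero_eq_eval_zero, coeff_iterate_derivative, zero_add,
    Nat.descFactorial_self, nsmul_eq_mul] at h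
  change ((k.factorial : ℝ) * gE S k l) * (((k + 2).factorial : ℝ) * gE S (k + 2) l)
    ≤ (((k + 1).factorial : ℝ) * gE S (k + 1) l) ^ 2 at h
  rw [Nat.factorial_succ (k + 1), Nat.factorial_succ k] at h
  push_cast at h
  have hF : (0 : ℝ) < k.factorial := by exact_mod_cast k.factorial_pos
  generalize (k.factorial : ℝ) = F at h hF
  have hk : (0 : ℝ) ≤ k := Nat.cast_nonneg k
  generalize (k : ℝ) = K at h hk
  generalize gE S k l = a at *
  generalize gE S (k + 1) l = b at *
  generalize gE S (k + 2) l = c at *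
  by_contra hc
  push Not at hc
  have hac : 0 < a * c := lt_of_le_of_lt (sq_nonneg b) hc
  have h5 : 0 < F ^ 2 * (K + 1) := by positivity
  have h6 : F ^ 2 * (K + 1) * ((K + 2) * (a * c)) ≤ F ^ 2 * (K + 1) * ((K + 1) * b ^ 2) := by
    nlinarith
  have h7 := le_of_mul_le_mul_left h6 h5
  nlinarith

theorem gE_erase_pos {ι : Type*} [DecidableEq ι] (S : Finset ι) (l : ι → ℝ) (i : ι)
    (hi : i ∈ S) (k : ℕ) (h : ∀ j ≤ k + 1, 0 < gE S j l) : ∀ j ≤ k, 0 < gE (S.erase i) j l := by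
  induction k with
  | zero =>
    intro j hj
    obtain rfl : j = 0 := by omega
    rw [gE_zero]; exact one_pos
  | succ k ih =>
    have ih' := ih fun j hj => h j (by omega)
    intro j hj
    rcases Nat.lt_or_ge j (k + 1) with hlt | hge
    · exact ih' j (by omega)
    obtain rfl : j = k + 1 := by omega
    have h0 := ih' k le_rfl
    have h1 := h (k + 1) (by omega)
    have h2 := h (k + 2) (by omega)
    have hN := gE_newton (S.erase i) l k
    rw [gE_erase S _ l i hi] at h1 h2
    generalize gE (S.erase i) k l = a at *
    change 0 < gE (S.erase i) (k + 2) l + l i * gE (S.erase i) (k + 1) l at h2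
    generalize gE (S.erase i) (k + 1) l = b at *
    generalize gE (S.erase i) (k + 2) l = c at *
    by_contra hb
    push Not at hb
    nlinarith [mul_pos h0 h2, mul_nonneg (neg_nonneg.2 hb) h1.le]

theorem quot_formula {ι : Type*} [DecidableEq ι] (S : Finset ι) (l : ι → ℝ) (k : ℕ)
    (h1 : 0 < gE S (k + 1) l) (h2 : ∀ i ∈ S, 0 < gE (S.erase i) k l) :
    ((k : ℝ) + 2) * (gE S (k + 2) l / gE S (k + 1) l) =
      ∑ i ∈ S, (l i - l i ^ 2 / (l i + gE (S.erase i) (k + 1) l / gE (S.erase i) k l)) := by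
  have h := gE_succ S (k + 1) l
  push_cast at h
  have h' : ((k : ℝ) + 2) * gE S (k + 2) l = ∑ i ∈ S, l i * gE (S.erase i) (k + 1) l := by
    rw [← h]; ring
  rw [← mul_div_assoc, h', Finset.sum_div]
  refine Finset.sum_congr rfl fun i hi => ?_
  have h3 := gE_erase S k l i hi
  have h4 := h2 i hi
  have h5 : l i + gE (S.erase i) (k + 1) l / gE (S.erase i) k l
      = gE S (k + 1) l / gE (S.erase i) k l := by
    rw [h3]; field_simp; ring
  rw [h5]
  have h6 : gE (S.erase i) (k + 1) l = gE S (k + 1) l - l i * gE (S.erase i) k l := by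
    rw [h3]; ring
  rw [h6]
  field_simp

theorem quot_denom_pos {ι : Type*} [DecidableEq ι] (S : Finset ι) (l : ι → ℝ) (k : ℕ)
    (h1 : 0 < gE S (k + 1) l) (i : ι) (hi : i ∈ S) (h2 : 0 < gE (S.erase i) k l) :
    0 < l i + gE (S.erase i) (k + 1) l / gE (S.erase i) k l := by
  have h5 : l i + gE (S.erase i) (k + 1) l / gE (S.erase i) k l
      = gE S (k + 1) l / gE (S.erase i) k l := by
    rw [gE_erase S k l i hi]; field_simp; ring
  rw [h5]; positivity

theorem parallel_ineq (a b A B D : ℝ) (hA : 0 < A) (hB : 0 < B) (hD : A + B ≤ D) :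
    (a - a ^ 2 / A) + (b - b ^ 2 / B) ≤ (a + b) - (a + b) ^ 2 / D := by
  have h1 : (a + b) ^ 2 / D ≤ (a + b) ^ 2 / (A + B) := by gcongr
  have h2 : (a + b) ^ 2 / (A + B) ≤ a ^ 2 / A + b ^ 2 / B := by
    rw [div_add_div _ _ hA.ne' hB.ne', div_le_div_iff₀ (by positivity) (by positivity)]
    nlinarith [sq_nonneg (a * B - b * A)]
  linarith

theorem gE_superadd {ι : Type*} [DecidableEq ι] (k : ℕ) : ∀ (S : Finset ι) (l m : ι → ℝ),
    (∀ j ≤ k + 1, 0 < gE S j l) → (∀ j ≤ k + 1, 0 < gE S j m) →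
    (∀ j ≤ k + 1, 0 < gE S j (l + m)) ∧
    gE S (k + 1) l / gE S k l + gE S (k + 1) m / gE S k m
      ≤ gE S (k + 1) (l + m) / gE S k (l + m) := by
  induction k with
  | zero =>
    intro S l m hl hm
    have hadd : gE S 1 (l + m) = gE S 1 l + gE S 1 m := by
      have e : ∀ f : ι → ℝ, gE S 1 f = ∑ i ∈ S, f i := by
        intro f
        have := gE_succ S 0 f
        simpa [gE_zero] using this
      simp only [e, Pi.add_apply, Finset.sum_add_distrib]
    refine ⟨?_, ?_⟩
    · intro j hj
      rcases Nat.lt_or_ge j 1 with h | h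
      · obtain rfl : j = 0 := by omega
        rw [gE_zero]; exact one_pos
      · obtain rfl : j = 1 := by omega
        rw [hadd]
        exact add_pos (hl 1 le_rfl) (hm 1 le_rfl)
    · simp [gE_zero, hadd]
  | succ k ih =>
    intro S l m hl hm
    have hP := (ih S l m (fun j hj => hl j (by omega)) (fun j hj => hm j (by omega))).1
    have hle : ∀ i ∈ S, ∀ j ≤ k + 1, 0 < gE (S.erase i) j l := fun i hi =>
      gE_erase_pos S l i hi (k + 1) hl
    have hme : ∀ i ∈ S, ∀ j ≤ k + 1, 0 < gE (S.erase i) j m := fun i hi =>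
      gE_erase_pos S m i hi (k + 1) hm
    have hI := fun i hi => ih (S.erase i) l m (hle i hi) (hme i hi)
    have hl1 := hl (k + 1) (by omega)
    have hm1 := hm (k + 1) (by omega)
    have hs1 := hP (k + 1) le_rfl
    have fl := quot_formula S l k hl1 fun i hi => hle i hi k (by omega)
    have fm := quot_formula S m k hm1 fun i hi => hme i hi k (by omega)
    have fs := quot_formula S (l + m) k hs1 fun i hi => (hI i hi).1 k (by omega)
    have hk : (0 : ℝ) < (k : ℝ) + 2 := by positivity
    have key : gE S (k + 2) l / gE S (k + 1) l + gE S (k + 2) m / gE S (k + 1) m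
        ≤ gE S (k + 2) (l + m) / gE S (k + 1) (l + m) := by
      refine le_of_mul_le_mul_left ?_ hk
      rw [mul_add, fl, fm, fs, ← Finset.sum_add_distrib]
      refine Finset.sum_le_sum fun i hi => ?_
      refine parallel_ineq _ _ _ _ _
        (quot_denom_pos S l k hl1 i hi (hle i hi k (by omega)))
        (quot_denom_pos S m k hm1 i hi (hme i hi k (by omega))) ?_
      have := (hI i hi).2
      simp only [Pi.add_apply]
      linarith
    refine ⟨?_, key⟩
    intro j hj
    rcases Nat.lt_or_ge j (k + 2) with h | h
    · exact hP j (by omega)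
    obtain rfl : j = k + 2 := by omega
    have p1 : 0 < gE S (k + 2) l / gE S (k + 1) l := div_pos (hl _ le_rfl) hl1
    have p2 : 0 < gE S (k + 2) m / gE S (k + 1) m := div_pos (hm _ le_rfl) hm1
    have p3 : 0 < gE S (k + 2) (l + m) / gE S (k + 1) (l + m) := by linarith
    exact (div_pos_iff_of_pos_right hs1).1 p3

theorem gE_smul_pos {ι : Type*} [DecidableEq ι] (S : Finset ι) (k : ℕ) (l : ι → ℝ) (s : ℝ)
    (hs : 0 < s) (h : 0 < gE S k l) : 0 < gE S k (s • l) := by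
  have e : gE S k (s • l) = s ^ k * gE S k l := by
    rw [gE_eq, gE_eq, Finset.mul_sum]
    refine Finset.sum_congr rfl fun t ht => ?_
    simp [Finset.prod_mul_distrib, (Finset.mem_powersetCard.1 ht).2]
  rw [e]; positivity

/-- **Gårding's theorem**: the cone `Γ_m` is a convex cone in `ℝⁿ`. -/
theorem gardingCone_convex_cone
    (n m : ℕ) (hn : 1 ≤ n) (hm : 1 ≤ m) (hmn : m ≤ n)
    (lam mu : Fin n → ℝ)
    (hlam : lam ∈ gardingCone n m) (hmu : mu ∈ gardingCone n m)
    (s t : ℝ) (hs : 0 < s) (ht : 0 < t) :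
    s • lam + t • mu ∈ gardingCone n m := by
  obtain ⟨k, rfl⟩ : ∃ k, m = k + 1 := ⟨m - 1, by omega⟩
  have key : ∀ (l : Fin n → ℝ) (r : ℝ), 0 < r → l ∈ gardingCone n (k + 1) →
      ∀ j ≤ k + 1, 0 < gE Finset.univ j (r • l) := by
    intro l r hr hl j hj
    refine gE_smul_pos _ _ _ _ hr ?_
    rcases Nat.eq_zero_or_pos j with rfl | h
    · rw [gE_zero]; exact one_pos
    · rw [gE_eq]; exact hl j h hj
  intro j _ hj
  have := (gE_superadd k Finset.univ _ _ (key lam s hs hlam) (key mu t ht hmu)).1 j hj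
  rwa [gE_eq] at this
end
end

section
/- For 1 ≤ m ≤ n, the set S_m of n×n complex Hermitian matrices A whose eigenvalue vector λ(A) lies in Γ̄_m is a convex cone: if A, B ∈ S_m and s, t ≥ 0, then sA + tB ∈ S_m. -/
noncomputable section

namespace GardingAux

open Polynomial

lemma splits_derivative {p : ℝ[X]} (hp : p.Splits) : p.derivative.Splits := by
  rw [splits_iff_card_roots] at hp ⊢
  have h1 := card_roots_le_derivative p
  have h2 := p.derivative.card_roots'
  by_cases h0 : p.natDegree = 0
  · rw [natDegree_eq_zero] at h0
    obtain ⟨c, rfl⟩ := h0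
    simp
  · have h3 := natDegree_derivative_lt h0
    omega

lemma newton_zero {p : ℝ[X]} (hp : p.Splits) :
    2 * (p.coeff 0 * p.coeff 2) ≤ p.coeff 1 ^ 2 := by
  induction hp using Submonoid.closure_induction with
  | mem x hx =>
    rcases hx with ⟨a, rfl⟩ | ⟨a, rfl⟩
    · simp [coeff_C]
    · simp [coeff_X, coeff_C]
  | one => simp [coeff_one]
  | mul f g _ _ hf hg =>
    have e2 : (f * g).coeff 2
        = f.coeff 0 * g.coeff 2 + f.coeff 1 * g.coeff 1 + f.coeff 2 * g.coeff 0 := by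
      rw [coeff_mul, Finset.Nat.sum_antidiagonal_eq_sum_range_succ_mk]
      simp [Finset.sum_range_succ]
    rw [e2, mul_coeff_zero, mul_coeff_one]
    nlinarith [mul_le_mul_of_nonneg_left hf (sq_nonneg (g.coeff 0)),
      mul_le_mul_of_nonneg_left hg (sq_nonneg (f.coeff 0))]

lemma newton (k : ℕ) : ∀ {p : ℝ[X]}, p.Splits →
    (k + 2 : ℝ) * (p.coeff k * p.coeff (k + 2)) ≤ (k + 1) * p.coeff (k + 1) ^ 2 := by
  induction k with
  | zero =>
    intro p hp
    simpa using newton_zero hp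
  | succ k ih =>
    intro p hp
    have h := ih (splits_derivative hp)
    simp only [coeff_derivative] at h
    push_cast at h ⊢
    have hk : (0 : ℝ) < (k + 1) * (k + 2) := by positivity
    refine le_of_mul_le_mul_left ?_ hk
    have e1 : k + 1 + 1 = k + 2 := rfl
    have e2 : k + 2 + 1 = k + 3 := rfl
    have e3 : k + 1 + 2 = k + 3 := rfl
    rw [e1, e2] at h
    rw [e1, e3]
    nlinarith [h]

lemma newton_weak {p : ℝ[X]} (hp : p.Splits) (k : ℕ) (ha : 0 < p.coeff k)
    (hc : 0 < p.coeff (k + 2)) :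
    p.coeff k * p.coeff (k + 2) ≤ p.coeff (k + 1) ^ 2 := by
  have h := newton k hp
  have h1 := mul_pos ha hc
  have hk : (0 : ℝ) < k + 1 := by positivity
  refine le_of_mul_le_mul_left ?_ hk
  nlinarith

variable {ι : Type*} [DecidableEq ι]

/-- generating polynomial -/
def gen (s : Finset ι) (x : ι → ℝ) : ℝ[X] := ∏ i ∈ s, (1 + C (x i) * X)

/-- elementary symmetric function of a subset of the variables -/
def e (s : Finset ι) (k : ℕ) (x : ι → ℝ) : ℝ := (gen s x).coeff k

lemma gen_splits (s : Finset ι) (x : ι → ℝ) : (gen s x).Splits := by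
  refine Splits.prod fun i _ => ?_
  apply Splits.of_natDegree_le_one
  compute_degree

lemma e_zero (s : Finset ι) (x : ι → ℝ) : e s 0 x = 1 := by
  simp [e, gen, coeff_zero_eq_eval_zero, eval_prod]

lemma gen_erase {s : Finset ι} {i : ι} (hi : i ∈ s) (x : ι → ℝ) :
    gen s x = (1 + C (x i) * X) * gen (s.erase i) x :=
  (Finset.mul_prod_erase s _ hi).symm

lemma e_succ {s : Finset ι} {i : ι} (hi : i ∈ s) (x : ι → ℝ) (k : ℕ) :
    e s (k + 1) x = e (s.erase i) (k + 1) x + x i * e (s.erase i) k x := by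
  simp [e, gen_erase hi, add_mul, mul_assoc, coeff_X_mul]

lemma e_euler (s : Finset ι) (x : ι → ℝ) (k : ℕ) :
    (k + 1 : ℝ) * e s (k + 1) x = ∑ i ∈ s, x i * e (s.erase i) k x := by
  have h : (gen s x).derivative.coeff k = _ := coeff_derivative _ _
  rw [mul_comm]
  unfold e
  rw [← h, gen, derivative_prod_finset, finsetSum_coeff]
  refine Finset.sum_congr rfl fun i _ => ?_
  simp [gen, coeff_mul_C]
  exact mul_comm _ _

/-- open cone -/
def G (s : Finset ι) (k : ℕ) (x : ι → ℝ) : Prop := ∀ j ≤ k, 0 < e s j x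

lemma G.mono {s : Finset ι} {k l : ℕ} {x : ι → ℝ} (h : G s k x) (hl : l ≤ k) : G s l x :=
  fun j hj => h j (hj.trans hl)

lemma G.erase {s : Finset ι} {i : ι} (hi : i ∈ s) {x : ι → ℝ} (k : ℕ) (h : G s (k + 1) x) :
    G (s.erase i) k x := by
  induction k with
  | zero =>
    intro j hj
    obtain rfl : j = 0 := by omega
    simp [e_zero]
  | succ k ih =>
    have h' := ih (h.mono (by omega))
    intro j hj
    rcases Nat.lt_or_eq_of_le hj with hj | rfl
    · exact h' j (by omega)
    by_contra! hb
    have ha := h' k le_rfl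
    have h1 := h (k + 1) (by omega)
    have h2 := h (k + 2) (by omega)
    rw [e_succ hi] at h1 h2
    have hx : 0 < x i := by
      by_contra! hx
      nlinarith
    have hc : 0 < e (s.erase i) (k + 2) x := by nlinarith
    have hN : e (s.erase i) k x * e (s.erase i) (k + 2) x ≤ e (s.erase i) (k + 1) x ^ 2 :=
      newton_weak (gen_splits _ _) k ha hc
    have h2' : 0 < e (s.erase i) (k + 2) x + x i * e (s.erase i) (k + 1) x := h2
    nlinarith [mul_pos ha h2', mul_nonneg (neg_nonneg.2 hb) h1.le]

lemma term_ineq {u v p q r : ℝ} (hu : 0 < u + p) (hv : 0 < v + q) (hr : p + q ≤ r) :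
    (u - u ^ 2 / (u + p)) + (v - v ^ 2 / (v + q)) ≤
      (u + v) - (u + v) ^ 2 / (u + v + r) := by
  have h1 : (u + v) ^ 2 / (u + v + r) ≤ (u + v) ^ 2 / ((u + p) + (v + q)) := by
    apply div_le_div_of_nonneg_left (sq_nonneg _) (by positivity) (by linarith)
  have h2 : (u + v) ^ 2 / ((u + p) + (v + q)) ≤ u ^ 2 / (u + p) + v ^ 2 / (v + q) := by
    generalize u + p = a at *
    generalize v + q = b at *
    rw [div_add_div _ _ hu.ne' hv.ne', div_le_div_iff₀ (by positivity) (by positivity)]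
    nlinarith [sq_nonneg (u * b - v * a), mul_pos hu hv]
  linarith

/-- quotient -/
def q (s : Finset ι) (k : ℕ) (x : ι → ℝ) : ℝ := e s (k + 1) x / e s k x

lemma x_add_q {s : Finset ι} {i : ι} (hi : i ∈ s) {x : ι → ℝ} {k : ℕ} (h : G s (k + 1) x) :
    0 < x i + q (s.erase i) k x := by
  have h1 := h (k + 1) le_rfl
  have h2 := h.erase hi k k le_rfl
  rw [e_succ hi] at h1
  have : x i + q (s.erase i) k x =
      (e (s.erase i) (k + 1) x + x i * e (s.erase i) k x) / e (s.erase i) k x := by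
    unfold q
    field_simp
    ring
  rw [this]
  positivity

lemma q_formula {s : Finset ι} {x : ι → ℝ} {k : ℕ} (h : G s (k + 1) x) :
    (k + 2 : ℝ) * q s (k + 1) x =
      ∑ i ∈ s, (x i - x i ^ 2 / (x i + q (s.erase i) k x)) := by
  have h0 := e_euler s x (k + 1)
  have h1 := h (k + 1) le_rfl
  have : (k + 2 : ℝ) * q s (k + 1) x = (∑ i ∈ s, x i * e (s.erase i) (k + 1) x) / e s (k + 1) x := by
    rw [← h0, q]
    push_cast
    ring
  rw [this, Finset.sum_div]
  refine Finset.sum_congr rfl fun i hi => ?_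
  have h2 := h.erase hi k k le_rfl
  rw [e_succ hi] at h1 ⊢
  have : x i + q (s.erase i) k x =
      (e (s.erase i) (k + 1) x + x i * e (s.erase i) k x) / e (s.erase i) k x := by
    unfold q
    field_simp
    ring
  rw [this]
  have h1' := h1.ne'
  field_simp
  ring

lemma main (k : ℕ) : ∀ (s : Finset ι) (x y : ι → ℝ), G s k x → G s k y →
    G s k (x + y) ∧ q s k x + q s k y ≤ q s k (x + y) := by
  induction k with
  | zero =>
    intro s x y _ _
    refine ⟨fun j hj => ?_, ?_⟩
    · obtain rfl : j = 0 := by omega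
      simp [e_zero]
    · have h : ∀ z : ι → ℝ, q s 0 z = ∑ i ∈ s, z i := by
        intro z
        have := e_euler s z 0
        simp [e_zero] at this
        simp [q, e_zero, this]
      simp [h, Finset.sum_add_distrib]
  | succ k ih =>
    intro s x y hx hy
    have hG : G s (k + 1) (x + y) := by
      obtain ⟨h1, h2⟩ := ih s x y (hx.mono (by omega)) (hy.mono (by omega))
      intro j hj
      rcases Nat.lt_or_eq_of_le hj with hj | rfl
      · exact h1 j (by omega)
      have h3 : 0 < q s k x := div_pos (hx _ le_rfl) (hx _ (by omega))
      have h4 : 0 < q s k y := div_pos (hy _ le_rfl) (hy _ (by omega))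
      have h5 : 0 < q s k (x + y) := by linarith
      exact (div_pos_iff_of_pos_right (h1 k le_rfl)).1 h5
    refine ⟨hG, ?_⟩
    have hk : (0 : ℝ) < k + 2 := by positivity
    refine le_of_mul_le_mul_left ?_ hk
    rw [mul_add, q_formula hx, q_formula hy, q_formula hG, ← Finset.sum_add_distrib]
    refine Finset.sum_le_sum fun i hi => ?_
    exact term_ineq (x_add_q hi hx) (x_add_q hi hy)
      (ih (s.erase i) x y (hx.erase hi) (hy.erase hi)).2

lemma esymm_eq (n k : ℕ) (x : Fin n → ℝ) : esymm n k x = e Finset.univ k x := by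
  unfold esymm e gen
  rw [Finset.prod_one_add, finsetSum_coeff, Finset.powersetCard_eq_filter, Finset.sum_filter]
  refine Finset.sum_congr rfl fun t _ => ?_
  rw [Finset.prod_mul_distrib, Finset.prod_const, ← map_prod, coeff_C_mul_X_pow]
  simp [eq_comm]

lemma mem_iff (n m : ℕ) (x : Fin n → ℝ) : x ∈ gardingCone n m ↔ G Finset.univ m x := by
  constructor
  · intro h j hj
    rcases Nat.eq_zero_or_pos j with rfl | h0
    · simp [e_zero]
    · rw [← esymm_eq]
      exact h j h0 hj
  · intro h j _ hj
    rw [esymm_eq]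
    exact h j hj

lemma add_mem' {n m : ℕ} {x y : Fin n → ℝ} (hx : x ∈ gardingCone n m)
    (hy : y ∈ gardingCone n m) : x + y ∈ gardingCone n m := by
  rw [mem_iff] at *
  exact (main m _ x y hx hy).1

lemma esymm_smul (n k : ℕ) (c : ℝ) (x : Fin n → ℝ) :
    esymm n k (c • x) = c ^ k * esymm n k x := by
  unfold esymm
  rw [Finset.mul_sum]
  refine Finset.sum_congr rfl fun t ht => ?_
  simp [Finset.prod_mul_distrib, (Finset.mem_powersetCard.1 ht).2]

lemma smul_mem' {n m : ℕ} {x : Fin n → ℝ} (hx : x ∈ gardingCone n m) {c : ℝ} (hc : 0 < c) :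
    c • x ∈ gardingCone n m := by
  intro k h1 h2
  rw [esymm_smul]
  have := hx k h1 h2
  positivity

lemma perm_mem' {n m : ℕ} {x : Fin n → ℝ} (hx : x ∈ gardingCone n m) (σ : Equiv.Perm (Fin n)) :
    x ∘ σ ∈ gardingCone n m := by
  rw [mem_iff] at *
  intro j hj
  have := hx j hj
  have h : gen Finset.univ (x ∘ σ) = gen Finset.univ x :=
    Equiv.prod_comp σ (fun i => 1 + C (x i) * X)
  rwa [e, h]

lemma cl_add {n m : ℕ} {x y : Fin n → ℝ} (hx : x ∈ closure (gardingCone n m))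
    (hy : y ∈ closure (gardingCone n m)) : x + y ∈ closure (gardingCone n m) :=
  map_mem_closure₂ continuous_add hx hy fun _ ha _ hb => add_mem' ha hb

lemma cl_perm {n m : ℕ} {x : Fin n → ℝ} (hx : x ∈ closure (gardingCone n m))
    (σ : Equiv.Perm (Fin n)) : x ∘ σ ∈ closure (gardingCone n m) :=
  map_mem_closure (f := fun z : Fin n → ℝ => z ∘ σ) (by fun_prop) hx fun _ ha => perm_mem' ha σ

lemma cl_smul {n m : ℕ} {x : Fin n → ℝ} (hx : x ∈ closure (gardingCone n m)) {c : ℝ}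
    (hc : 0 ≤ c) : c • x ∈ closure (gardingCone n m) := by
  have hc' : c ∈ closure (Set.Ioi (0 : ℝ)) := by
    rw [closure_Ioi]
    exact hc
  exact map_mem_closure₂ continuous_smul hc' hx fun _ ha _ hb => smul_mem' hb ha

lemma cl_convex (n m : ℕ) : Convex ℝ (closure (gardingCone n m)) :=
  fun _ hx _ hy _ _ ha hb _ => cl_add (cl_smul hx ha) (cl_smul hy hb)

lemma cl_ds {n m : ℕ} {x : Fin n → ℝ} (hx : x ∈ closure (gardingCone n m))
    {D : Matrix (Fin n) (Fin n) ℝ} (hD : D ∈ doublyStochastic ℝ (Fin n)) :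
    D.mulVec x ∈ closure (gardingCone n m) := by
  obtain ⟨w, hw, hw1, rfl⟩ := exists_eq_sum_perm_of_mem_doublyStochastic hD
  rw [Matrix.sum_mulVec]
  have hp : ∀ σ : Equiv.Perm (Fin n), (σ.permMatrix ℝ).mulVec x ∈ closure (gardingCone n m) := by
    intro σ
    have : (σ.permMatrix ℝ).mulVec x = x ∘ σ := by
      simp [Matrix.permMatrix_mulVec]
    rw [this]
    exact cl_perm hx σ
  have h := (cl_convex n m).sum_mem (t := Finset.univ) (w := w)
    (z := fun σ => (σ.permMatrix ℝ).mulVec x) (fun i _ => hw i) hw1 (fun σ _ => hp σ)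
  simpa [Matrix.smul_mulVec] using h

lemma unitary_ds {n : ℕ} (W : Matrix.unitaryGroup (Fin n) ℂ) :
    (Matrix.of fun i j => Complex.normSq ((W : Matrix (Fin n) (Fin n) ℂ) i j)) ∈
      doublyStochastic ℝ (Fin n) := by
  rw [mem_doublyStochastic_iff_sum]
  refine ⟨fun i j => Complex.normSq_nonneg _, fun i => ?_, fun j => ?_⟩
  · have h0 : (W : Matrix (Fin n) (Fin n) ℂ) * star (W : Matrix (Fin n) (Fin n) ℂ) = 1 :=
      Unitary.coe_mul_star_self W
    have h := congrFun (congrFun h0 i) i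
    rw [Matrix.mul_apply, Matrix.one_apply_eq] at h
    simp only [Matrix.star_apply, RCLike.star_def, Complex.mul_conj] at h
    exact_mod_cast h
  · have h0 : star (W : Matrix (Fin n) (Fin n) ℂ) * (W : Matrix (Fin n) (Fin n) ℂ) = 1 :=
      Unitary.coe_star_mul_self W
    have h := congrFun (congrFun h0 j) j
    rw [Matrix.mul_apply, Matrix.one_apply_eq] at h
    simp only [Matrix.star_apply, RCLike.star_def, ← Complex.normSq_eq_conj_mul_self] at h
    exact_mod_cast h

/-- the diagonal of a unitary conjugate has real part in the closed cone -/
lemma diag_mem {n m : ℕ} {A : Matrix (Fin n) (Fin n) ℂ} (hA : A.IsHermitian)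
    (hAg : hA.eigenvalues ∈ closure (gardingCone n m)) (U : Matrix.unitaryGroup (Fin n) ℂ) :
    (fun i => ((star (U : Matrix (Fin n) (Fin n) ℂ) * A * U) i i).re) ∈
      closure (gardingCone n m) := by
  have h := cl_ds hAg (unitary_ds (star U * hA.eigenvectorUnitary))
  convert h using 1
  ext i
  have hs := hA.spectral_theorem
  rw [Unitary.conjStarAlgAut_apply] at hs
  set V' := hA.eigenvectorUnitary with hV
  set V : Matrix (Fin n) (Fin n) ℂ := (V' : Matrix (Fin n) (Fin n) ℂ) with hV2
  have h2 : star (U : Matrix (Fin n) (Fin n) ℂ) * A * (U : Matrix (Fin n) (Fin n) ℂ) =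
      (star (U : Matrix (Fin n) (Fin n) ℂ) * V) *
        Matrix.diagonal (RCLike.ofReal ∘ hA.eigenvalues) *
        star (star (U : Matrix (Fin n) (Fin n) ℂ) * V) := by
    conv_lhs => rw [hs]
    simp [mul_assoc]
  rw [h2, Matrix.mul_apply]
  simp only [Matrix.mul_diagonal, Matrix.mulVec, dotProduct, Matrix.of_apply, Complex.re_sum]
  refine Finset.sum_congr rfl fun j _ => ?_
  change _ = Complex.normSq ((star (U : Matrix (Fin n) (Fin n) ℂ) * V) i j) * _
  generalize star (U : Matrix (Fin n) (Fin n) ℂ) * V = W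
  simp [Complex.normSq_apply]
  ring

end GardingAux

/-- The set of Hermitian `n×n` matrices whose eigenvalue vector lies in `Γ̄_m` is a
convex cone: it is stable under nonnegative combinations `s•A + t•B`. -/
theorem hermitian_gardingCone_convex_cone
    (n m : ℕ) (hm : 1 ≤ m) (hmn : m ≤ n)
    (A B : Matrix (Fin n) (Fin n) ℂ)
    (hA : A.IsHermitian) (hB : B.IsHermitian)
    (hAg : hA.eigenvalues ∈ closure (gardingCone n m))
    (hBg : hB.eigenvalues ∈ closure (gardingCone n m))
    (s t : ℝ) (hs : 0 ≤ s) (ht : 0 ≤ t) :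
    ∃ h : (s • A + t • B).IsHermitian,
      h.eigenvalues ∈ closure (gardingCone n m) := by
  have h : (s • A + t • B).IsHermitian := by
    refine Matrix.IsHermitian.add ?_ ?_
    · rw [Matrix.IsHermitian, Matrix.conjTranspose_smul, hA.eq, star_trivial]
    · rw [Matrix.IsHermitian, Matrix.conjTranspose_smul, hB.eq, star_trivial]
  refine ⟨h, ?_⟩
  have h1 := GardingAux.diag_mem hA hAg h.eigenvectorUnitary
  have h2 := GardingAux.diag_mem hB hBg h.eigenvectorUnitary
  have h3 := GardingAux.cl_add (GardingAux.cl_smul h1 hs) (GardingAux.cl_smul h2 ht)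
  convert h3 using 1
  ext i
  have h4 := h.conjStarAlgAut_star_eigenvectorUnitary
  rw [Unitary.conjStarAlgAut_star_apply] at h4
  have h5 := congrArg Complex.re (congrFun (congrFun h4 i) i)
  rw [Matrix.diagonal_apply_eq] at h5
  have h6 : h.eigenvalues i = _ := h5.symm
  rw [h6]
  simp [mul_add, add_mul]
end
end

section
/- Let u : ℂⁿ → ℝ be a C² function, let r > 0, z₀ ∈ ℂⁿ and c₁ > 0. For w ∈ ℂⁿ write ∂_w u = Σ_{j=1}^n w_j ∂u/∂z_j. Suppose that for every w ∈ ℂⁿ with ‖w‖ = 1 one has (1/Vol(B(z₀,r))) ∫_{B(z₀,r)} |∂_w u|² dV ≥ c₁. Then the function z ↦ [u²]_r(z) is C² near z₀ and for every w ∈ ℂⁿ with ‖w‖ = 1: w* H_{[u²]_r}(z₀) w ≥ 2·(1/Vol(B(z₀,r))) ∫_{B(z₀,r)} u·(w* H_u w) dV + 2c₁. -/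
open MeasureTheory Metric Complex

noncomputable section

/-- The `j`-th standard basis vector of `ℂⁿ`. -/
def ebasis (n : ℕ) (j : Fin n) : EuclideanSpace ℂ (Fin n) :=
  EuclideanSpace.single j 1

/-- The complex Hessian matrix `(H_u(z))_{jk} = ∂²u/∂z_j∂z̄_k(z)`, expressed through real
second derivatives: `∂²u/∂z_j∂z̄_k = ¼[(u_{x_jx_k} + u_{y_jy_k}) + i(u_{x_jy_k} - u_{y_jx_k})]`. -/
def complexHessian {n : ℕ} (u : EuclideanSpace ℂ (Fin n) → ℝ)
    (z : EuclideanSpace ℂ (Fin n)) : Matrix (Fin n) (Fin n) ℂ :=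
  fun j k =>
    (1 / 4 : ℂ) *
      (((iteratedFDeriv ℝ 2 u z ![ebasis n j, ebasis n k]
          + iteratedFDeriv ℝ 2 u z ![Complex.I • ebasis n j, Complex.I • ebasis n k] : ℝ) : ℂ)
        + Complex.I *
          ((iteratedFDeriv ℝ 2 u z ![ebasis n j, Complex.I • ebasis n k]
            - iteratedFDeriv ℝ 2 u z ![Complex.I • ebasis n j, ebasis n k] : ℝ) : ℂ))

instance (n : ℕ) : MeasurableSpace (EuclideanSpace ℂ (Fin n)) := borel _
instance (n : ℕ) : BorelSpace (EuclideanSpace ℂ (Fin n)) := ⟨rfl⟩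

/-- The Wirtinger derivative `∂u/∂z_j = ½(∂u/∂x_j − i ∂u/∂y_j)`. -/
def wirtingerDeriv {n : ℕ} (u : EuclideanSpace ℂ (Fin n) → ℝ) (j : Fin n)
    (z : EuclideanSpace ℂ (Fin n)) : ℂ :=
  (((fderiv ℝ u z (ebasis n j) : ℝ) : ℂ)
    - Complex.I * ((fderiv ℝ u z (Complex.I • ebasis n j) : ℝ) : ℂ)) / 2

/-- The Hermitian quadratic form `w* A w = Σ_{j,k} conj(w_j) A_{jk} w_k`. -/
def quadForm {n : ℕ} (A : Matrix (Fin n) (Fin n) ℂ) (w : EuclideanSpace ℂ (Fin n)) : ℂ :=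
  ∑ j, ∑ k, (starRingEnd ℂ) (w j) * A j k * w k

section GenericAverage

open scoped Pointwise

variable {E F : Type*} [NormedAddCommGroup E] [NormedSpace ℝ E] [FiniteDimensional ℝ E]
  [MeasurableSpace E] [BorelSpace E] [NormedAddCommGroup F] [NormedSpace ℝ F]

theorem havg_integrable (ν : Measure E) [IsFiniteMeasure ν] (K : Set E) (hK : IsCompact K)
    (hν : ν.restrict K = ν) (g : E → F) (hg : Continuous g) (z : E) :
    Integrable (fun x => g (z + x)) ν := by
  have h : IntegrableOn (fun x => g (z + x)) K ν :=
    ContinuousOn.integrableOn_compact hK (by fun_prop)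
  rwa [IntegrableOn, hν] at h

theorem havg_continuous (ν : Measure E) [IsFiniteMeasure ν] (K : Set E) (hK : IsCompact K)
    (hν : ν.restrict K = ν) (g : E → F) (hg : Continuous g) :
    Continuous (fun z => ∫ x, g (z + x) ∂ν) := by
  have : ProperSpace E := FiniteDimensional.proper ℝ E
  have h := continuous_parametric_integral_of_continuous (μ := ν)
    (f := fun z x => g (z + x)) (by unfold Function.uncurry; fun_prop) hK
  rwa [hν] at h

theorem havg_hasFDerivAt (ν : Measure E) [IsFiniteMeasure ν] (K : Set E) (hK : IsCompact K)
    (hν : ν.restrict K = ν) (g : E → F) (hg : ContDiff ℝ 1 g) (z : E) :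
    HasFDerivAt (fun z => ∫ x, g (z + x) ∂ν) (∫ x, fderiv ℝ g (z + x) ∂ν) z := by
  have : ProperSpace E := FiniteDimensional.proper ℝ E
  have hg' : Continuous (fderiv ℝ g) := hg.continuous_fderiv (by norm_num)
  have hc : IsCompact (closedBall z 1 + K) := (isCompact_closedBall z 1).add hK
  obtain ⟨C, hC⟩ := hc.exists_bound_of_continuousOn hg'.continuousOn
  refine hasFDerivAt_integral_of_dominated_of_fderiv_le
    (F' := fun z x => fderiv ℝ g (z + x)) (bound := fun _ => C) (closedBall_mem_nhds z one_pos)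
    (Filter.Eventually.of_forall fun y =>
      (havg_integrable ν K hK hν g hg.continuous y).aestronglyMeasurable)
    (havg_integrable ν K hK hν g hg.continuous z)
    (havg_integrable ν K hK hν _ hg' z).aestronglyMeasurable ?_ (integrable_const C) ?_
  · have : ∀ᵐ x ∂ν, x ∈ K := by
      rw [← hν]; exact ae_restrict_mem hK.measurableSet
    filter_upwards [this] with x hx y hy
    exact hC _ (Set.add_mem_add hy hx)
  · refine Filter.Eventually.of_forall fun x y _ => ?_
    have h1 : HasFDerivAt g (fderiv ℝ g (y + x)) (y + x) :=
      (hg.differentiable (by norm_num) _).hasFDerivAt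
    exact (hasFDerivAt_comp_add_right x).2 h1

theorem havg_contDiff (ν : Measure E) [IsFiniteMeasure ν] (K : Set E) (hK : IsCompact K)
    (hν : ν.restrict K = ν) (g : E → F) (hg : ContDiff ℝ 2 g) :
    ContDiff ℝ 2 (fun z => ∫ x, g (z + x) ∂ν) ∧
      ∀ z, fderiv ℝ (fderiv ℝ (fun z => ∫ x, g (z + x) ∂ν)) z =
        ∫ x, fderiv ℝ (fderiv ℝ g) (z + x) ∂ν := by
  have hg1 : ContDiff ℝ 1 g := hg.of_le (by norm_num)
  have hgd : ContDiff ℝ 1 (fderiv ℝ g) := hg.fderiv_right (by norm_num)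
  have e1 : fderiv ℝ (fun z => ∫ x, g (z + x) ∂ν) = fun z => ∫ x, fderiv ℝ g (z + x) ∂ν :=
    funext fun z => (havg_hasFDerivAt ν K hK hν g hg1 z).fderiv
  have h2 := havg_hasFDerivAt ν K hK hν _ hgd
  have e2 : fderiv ℝ (fun z => ∫ x, fderiv ℝ g (z + x) ∂ν) =
      fun z => ∫ x, fderiv ℝ (fderiv ℝ g) (z + x) ∂ν := funext fun z => (h2 z).fderiv
  refine ⟨?_, fun z => by rw [e1, e2]⟩
  rw [show (2 : WithTop ℕ∞) = 1 + 1 by norm_num, contDiff_succ_iff_fderiv]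
  refine ⟨fun z => (havg_hasFDerivAt ν K hK hν g hg1 z).differentiableAt, by simp, ?_⟩
  rw [e1, contDiff_one_iff_fderiv]
  refine ⟨fun z => (h2 z).differentiableAt, ?_⟩
  rw [e2]
  exact havg_continuous ν K hK hν _ (hgd.continuous_fderiv (by norm_num))

theorem havg_fderiv2 (ν : Measure E) [IsFiniteMeasure ν] (K : Set E) (hK : IsCompact K)
    (hν : ν.restrict K = ν) (g : E → ℝ) (hg : ContDiff ℝ 2 g) (L : (E →L[ℝ] E →L[ℝ] ℝ) →L[ℝ] ℝ)
    (z : E) :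
    L (fderiv ℝ (fderiv ℝ (fun z => ∫ x, g (z + x) ∂ν)) z) =
      ∫ x, L (fderiv ℝ (fderiv ℝ g) (z + x)) ∂ν := by
  have hc : Continuous (fderiv ℝ (fderiv ℝ g)) :=
    (hg.fderiv_right (m := 1) (by norm_num)).continuous_fderiv (by norm_num)
  rw [(havg_contDiff ν K hK hν g hg).2 z]
  exact (ContinuousLinearMap.integral_comp_comm (𝕜 := ℝ) (E := E →L[ℝ] E →L[ℝ] ℝ) (Fₗ := ℝ) L 
    (havg_integrable (F := E →L[ℝ] E →L[ℝ] ℝ) ν K hK hν (fderiv ℝ (fderiv ℝ g)) hc z)).symm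

theorem havg_translate (μ : Measure E) [μ.IsAddHaarMeasure] (g : E → F) (z : E) (r : ℝ) :
    ⨍ x in ball z r, g x ∂μ = ⨍ x in ball 0 r, g (z + x) ∂μ := by
  have hp := measurePreserving_add_left μ z
  have hpre : (fun x => z + x) ⁻¹' ball z r = ball 0 r := by
    ext x; simp [mem_ball, dist_eq_norm]
  have h := hp.setIntegral_preimage_emb (measurableEmbedding_addLeft z) g (ball z r)
  rw [hpre] at h
  have hm : μ.real (ball z r) = μ.real (ball 0 r) := by
    rw [Measure.real, Measure.real, Measure.addHaar_ball_center]
  rw [setAverage_eq, setAverage_eq, h, hm]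

/-- second derivative of a square -/
theorem fderiv2_sq (u : E → ℝ) (hu : ContDiff ℝ 2 u) (z a b : E) :
    fderiv ℝ (fderiv ℝ (fun z => u z ^ 2)) z a b =
      2 * u z * fderiv ℝ (fderiv ℝ u) z a b + 2 * (fderiv ℝ u z a * fderiv ℝ u z b) := by
  have hd : Differentiable ℝ u := hu.differentiable (by norm_num)
  have hd' : Differentiable ℝ (fderiv ℝ u) :=
    (hu.fderiv_right (m := 1) (by norm_num)).differentiable (by norm_num)
  have e1 : fderiv ℝ (fun z => u z ^ 2) = fun z => (2 * u z) • fderiv ℝ u z := by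
    funext y
    have := ((hd y).hasFDerivAt.pow 2).fderiv
    simpa using this
  have h2 := (((hd z).hasFDerivAt.const_mul 2).smul (hd' z).hasFDerivAt).fderiv
  rw [e1]
  erw [h2]
  simp
  ring

end GenericAverage

/-- The real part of the Hermitian form as a functional of the real second derivative. -/
def hessFun {n : ℕ} (w : EuclideanSpace ℂ (Fin n)) :
    (EuclideanSpace ℂ (Fin n) →L[ℝ] EuclideanSpace ℂ (Fin n) →L[ℝ] ℝ) →L[ℝ] ℝ :=
  let ev (a b : EuclideanSpace ℂ (Fin n)) :
      (EuclideanSpace ℂ (Fin n) →L[ℝ] EuclideanSpace ℂ (Fin n) →L[ℝ] ℝ) →L[ℝ] ℝ :=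
    (ContinuousLinearMap.apply ℝ ℝ b).comp (ContinuousLinearMap.apply ℝ _ a)
  ∑ j, ∑ k, ((((starRingEnd ℂ) (w j) * w k).re / 4) •
        (ev (ebasis n j) (ebasis n k) + ev (Complex.I • ebasis n j) (Complex.I • ebasis n k))
    + ((-(((starRingEnd ℂ) (w j) * w k).im / 4)) • ev (ebasis n j) (Complex.I • ebasis n k)
      + (((starRingEnd ℂ) (w j) * w k).im / 4) • ev (Complex.I • ebasis n j) (ebasis n k)))

theorem hessFun_apply {n : ℕ} (w : EuclideanSpace ℂ (Fin n))
    (B : EuclideanSpace ℂ (Fin n) →L[ℝ] EuclideanSpace ℂ (Fin n) →L[ℝ] ℝ) :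
    hessFun w B = ∑ j, ∑ k, ((((starRingEnd ℂ) (w j) * w k).re / 4) *
        (B (ebasis n j) (ebasis n k) + B (Complex.I • ebasis n j) (Complex.I • ebasis n k))
    - (((starRingEnd ℂ) (w j) * w k).im / 4) *
        (B (ebasis n j) (Complex.I • ebasis n k) - B (Complex.I • ebasis n j) (ebasis n k))) := by
  simp only [hessFun, sum_apply, add_apply, smul_apply,
    ContinuousLinearMap.comp_apply, ContinuousLinearMap.apply_apply, smul_eq_mul]
  refine Finset.sum_congr rfl fun j _ => Finset.sum_congr rfl fun k _ => ?_
  ring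

theorem quadForm_re {n : ℕ} (v : EuclideanSpace ℂ (Fin n) → ℝ) (z w : EuclideanSpace ℂ (Fin n)) :
    (quadForm (complexHessian v z) w).re = hessFun w (fderiv ℝ (fderiv ℝ v) z) := by
  rw [hessFun_apply, quadForm, Complex.re_sum]
  refine Finset.sum_congr rfl fun j _ => ?_
  rw [Complex.re_sum]
  refine Finset.sum_congr rfl fun k _ => ?_
  simp only [complexHessian, iteratedFDeriv_two_apply, Matrix.cons_val_zero, Matrix.cons_val_one]
  generalize fderiv ℝ (fderiv ℝ v) z = B
  generalize B (ebasis n j) (ebasis n k) = b1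
  generalize B (ebasis n j) (Complex.I • ebasis n k) = b2
  generalize B (Complex.I • ebasis n j) (ebasis n k) = b3
  generalize B (Complex.I • ebasis n j) (Complex.I • ebasis n k) = b4
  rw [show (1 / 4 : ℂ) = ((1 / 4 : ℝ) : ℂ) by push_cast; rfl]
  simp only [Complex.mul_re, Complex.mul_im, Complex.add_re, Complex.add_im, Complex.ofReal_re,
    Complex.ofReal_im, Complex.I_re, Complex.I_im, Complex.conj_re, Complex.conj_im]
  ring

/-- coordinatewise conjugation -/
def conjVec {n : ℕ} (w : EuclideanSpace ℂ (Fin n)) : EuclideanSpace ℂ (Fin n) :=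
  WithLp.toLp 2 fun j => (starRingEnd ℂ) (w j)

theorem norm_conjVec {n : ℕ} (w : EuclideanSpace ℂ (Fin n)) : ‖conjVec w‖ = ‖w‖ := by
  simp [EuclideanSpace.norm_eq, conjVec]

theorem norm_sq_wirt {n : ℕ} (u : EuclideanSpace ℂ (Fin n) → ℝ) (z w : EuclideanSpace ℂ (Fin n)) :
    ‖∑ j, conjVec w j * wirtingerDeriv u j z‖ ^ 2 =
      ∑ j, ∑ k, ((((starRingEnd ℂ) (w j) * w k).re / 4) *
        (fderiv ℝ u z (ebasis n j) * fderiv ℝ u z (ebasis n k)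
          + fderiv ℝ u z (Complex.I • ebasis n j) * fderiv ℝ u z (Complex.I • ebasis n k))
    - (((starRingEnd ℂ) (w j) * w k).im / 4) *
        (fderiv ℝ u z (ebasis n j) * fderiv ℝ u z (Complex.I • ebasis n k)
          - fderiv ℝ u z (Complex.I • ebasis n j) * fderiv ℝ u z (ebasis n k))) := by
  have h : ‖∑ j, conjVec w j * wirtingerDeriv u j z‖ ^ 2 =
      ((∑ j, conjVec w j * wirtingerDeriv u j z) *
        (starRingEnd ℂ) (∑ j, conjVec w j * wirtingerDeriv u j z)).re := by
    rw [Complex.mul_conj, Complex.normSq_eq_norm_sq, Complex.ofReal_re]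
  rw [h, map_sum, Finset.sum_mul_sum, Complex.re_sum]
  refine Finset.sum_congr rfl fun j _ => ?_
  rw [Complex.re_sum]
  refine Finset.sum_congr rfl fun k _ => ?_
  simp only [conjVec, wirtingerDeriv]
  generalize fderiv ℝ u z (ebasis n j) = b1
  generalize fderiv ℝ u z (ebasis n k) = b2
  generalize fderiv ℝ u z (Complex.I • ebasis n j) = b3
  generalize fderiv ℝ u z (Complex.I • ebasis n k) = b4
  simp only [div_eq_mul_inv]
  rw [show (2⁻¹ : ℂ) = ((2⁻¹ : ℝ) : ℂ) by push_cast; rfl]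
  simp only [map_mul, map_sub, Complex.mul_re, Complex.mul_im, Complex.sub_re, Complex.sub_im,
    Complex.ofReal_re,
    Complex.ofReal_im, Complex.I_re, Complex.I_im, Complex.conj_re, Complex.conj_im]
  ring

theorem hessFun_sq {n : ℕ} (u : EuclideanSpace ℂ (Fin n) → ℝ) (hu : ContDiff ℝ 2 u)
    (z w : EuclideanSpace ℂ (Fin n)) :
    hessFun w (fderiv ℝ (fderiv ℝ (fun z => u z ^ 2)) z) =
      2 * (u z * hessFun w (fderiv ℝ (fderiv ℝ u) z)) +
        2 * ‖∑ j, conjVec w j * wirtingerDeriv u j z‖ ^ 2 := by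
  rw [hessFun_apply, hessFun_apply, norm_sq_wirt]
  simp only [Finset.mul_sum, ← Finset.sum_add_distrib]
  refine Finset.sum_congr rfl fun j _ => Finset.sum_congr rfl fun k _ => ?_
  simp only [fderiv2_sq u hu]
  ring

/-- Inequality (4) of the Liouville proof: if the averages of `|∂_w u|²` over `B(z₀,r)` are
bounded below by `c₁` in every unit direction `w`, then the ball average `[u²]_r` is `C²` near
`z₀` and `dd^c [u²]_r ≥ 2[u dd^c u]_r + 2c₁ β` there, as quadratic forms. -/
theorem hessian_average_sq_lower_bound
    (n : ℕ)
    (u : EuclideanSpace ℂ (Fin n) → ℝ) (hu : ContDiff ℝ 2 u)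
    (r c₁ : ℝ) (hr : 0 < r) (hc₁ : 0 < c₁)
    (z₀ : EuclideanSpace ℂ (Fin n))
    (hlow : ∀ w : EuclideanSpace ℂ (Fin n), ‖w‖ = 1 →
      c₁ ≤ ⨍ z in ball z₀ r, ‖∑ j, w j * wirtingerDeriv u j z‖ ^ 2) :
    ContDiffAt ℝ 2 (fun z => ⨍ w in ball z r, (u w) ^ 2) z₀ ∧
      ∀ w : EuclideanSpace ℂ (Fin n), ‖w‖ = 1 →
        2 * (⨍ z in ball z₀ r, u z * (quadForm (complexHessian u z) w).re) + 2 * c₁ ≤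
          (quadForm (complexHessian (fun z => ⨍ w' in ball z r, (u w') ^ 2) z₀) w).re := by
  set ν : Measure (EuclideanSpace ℂ (Fin n)) :=
    ((volume.restrict (ball (0 : EuclideanSpace ℂ (Fin n)) r)) Set.univ)⁻¹ •
      volume.restrict (ball (0 : EuclideanSpace ℂ (Fin n)) r) with hνdef
  have hav : ∀ (g : EuclideanSpace ℂ (Fin n) → ℝ) (z : EuclideanSpace ℂ (Fin n)),
      ⨍ x in ball z r, g x = ∫ x, g (z + x) ∂ν := fun g z => havg_translate volume g z r
  have hpos : (volume.restrict (ball (0 : EuclideanSpace ℂ (Fin n)) r)) Set.univ ≠ 0 := by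
    rw [Measure.restrict_apply_univ]
    exact (measure_ball_pos _ _ hr).ne'
  have hfin : IsFiniteMeasure (volume.restrict (ball (0 : EuclideanSpace ℂ (Fin n)) r)) :=
    ⟨by rw [Measure.restrict_apply_univ]; exact measure_ball_lt_top⟩
  have hνfin : IsFiniteMeasure ν := Measure.smul_finite _ (ENNReal.inv_ne_top.2 hpos)
  have hK : IsCompact (closedBall (0 : EuclideanSpace ℂ (Fin n)) r) := isCompact_closedBall _ _
  have hν : ν.restrict (closedBall 0 r) = ν := by
    rw [hνdef, Measure.restrict_smul, Measure.restrict_restrict measurableSet_closedBall,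
      Set.inter_eq_right.2 ball_subset_closedBall]
  have hu2 : ContDiff ℝ 2 (fun z => u z ^ 2) := hu.pow 2
  have hfun : (fun z => ⨍ w in ball z r, (u w) ^ 2) = fun z => ∫ x, u (z + x) ^ 2 ∂ν :=
    funext fun z => hav (fun w => u w ^ 2) z
  obtain ⟨hC, -⟩ := havg_contDiff ν _ hK hν _ hu2
  rw [hfun]
  refine ⟨hC.contDiffAt, fun w hw => ?_⟩
  have hl := hlow (conjVec w) (by rw [norm_conjVec, hw])
  rw [hav (fun z => ‖∑ j, conjVec w j * wirtingerDeriv u j z‖ ^ 2)] at hl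
  rw [hav (fun z => u z * (quadForm (complexHessian u z) w).re), quadForm_re,
    havg_fderiv2 ν _ hK hν _ hu2]
  have cont2 : ∀ v : EuclideanSpace ℂ (Fin n) → ℝ, ContDiff ℝ 2 v →
      Continuous (fderiv ℝ (fderiv ℝ v)) := fun v hv =>
    (hv.fderiv_right (m := 1) (by norm_num)).continuous_fderiv (by norm_num)
  simp only [quadForm_re, hessFun_sq u hu]
  have c1 : Continuous fun z => u z * hessFun w (fderiv ℝ (fderiv ℝ u) z) :=
    hu.continuous.mul ((hessFun w).continuous.comp (cont2 u hu))
  have hf : Continuous (fderiv ℝ u) := hu.continuous_fderiv (by norm_num)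
  have c2 : Continuous fun z => ‖∑ j, conjVec w j * wirtingerDeriv u j z‖ ^ 2 := by
    unfold wirtingerDeriv
    fun_prop
  rw [integral_add ((havg_integrable ν _ hK hν _ c1 z₀).const_mul 2)
    ((havg_integrable ν _ hK hν _ c2 z₀).const_mul 2), integral_const_mul, integral_const_mul]
  linarith
end
end
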